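/- Let Ψ_1, Ψ_2 be the scaffold operators of Theorem 3.5. For all 0 ≤ i, j ≤ p−1 and all α ∈ K_2 with v_2(α) ≡ b_2 mod p^2, one has v_2(Ψ_1^i·Ψ_2^j·α) = v_2(α) + j·b_2 + i·p·b_1. -/

import Mathlib

/-- A normalized discrete valuation on a field `K`, recorded as a function
`v : K → ℤ`.  The value of `v` at `0` is irrelevant: all conditions below only
refer to nonzero elements (the convention `v 0 = ∞` being understood). -/
structure IsDiscVal {K : Type*} [Field K] (v : K → ℤ) : Prop where
  map_one : v 1 = 0
  map_mul : ∀ x y : K, x ≠ 0 → y ≠ 0 → v (x * y) = v x + v y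
  min_le_add : ∀ x y : K, x ≠ 0 → y ≠ 0 → x + y ≠ 0 → min (v x) (v y) ≤ v (x + y)
  exists_uniformizer : ∃ π : K, π ≠ 0 ∧ v π = 1

/-- `ValGE v n x` says that `v x ≥ n`, with the convention `v 0 = ∞`. -/
def ValGE {K : Type*} [Field K] (v : K → ℤ) (n : ℤ) (x : K) : Prop :=
  x = 0 ∨ n ≤ v x

/-- `ValEQ v n x` says that `x` is nonzero of valuation exactly `n`. -/
def ValEQ {K : Type*} [Field K] (v : K → ℤ) (n : ℤ) (x : K) : Prop :=
  x ≠ 0 ∧ v x = n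

namespace IsDiscVal

section Basic

variable {K : Type*} [Field K] {v : K → ℤ}

lemma map_neg_one (hv : IsDiscVal v) : v (-1) = 0 := by
  have h := hv.map_mul (-1) (-1) (by simp) (by simp)
  rw [neg_one_mul, neg_neg, hv.map_one] at h
  omega

lemma map_neg (hv : IsDiscVal v) (x : K) : v (-x) = v x := by
  by_cases hx : x = 0
  · simp [hx]
  · rw [← neg_one_mul, hv.map_mul _ _ (by simp) hx, hv.map_neg_one, zero_add]

lemma map_inv (hv : IsDiscVal v) {x : K} (hx : x ≠ 0) : v x⁻¹ = -v x := by
  have h := hv.map_mul x x⁻¹ hx (inv_ne_zero hx)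
  rw [mul_inv_cancel₀ hx, hv.map_one] at h
  omega

lemma ge_zero (n : ℤ) : ValGE v n 0 := Or.inl rfl

lemma ge_mono {n k : ℤ} {x : K} (h : ValGE v n x) (hk : k ≤ n) : ValGE v k x :=
  h.imp id fun h => hk.trans h

lemma ge_self (x : K) : ValGE v (v x) x := Or.inr le_rfl

lemma ge_of_eq {n : ℤ} {x : K} (h : ValEQ v n x) : ValGE v n x := Or.inr h.2.ge

lemma ge_one (hv : IsDiscVal v) : ValGE v 0 1 := Or.inr hv.map_one.ge

lemma ge_add (hv : IsDiscVal v) {n : ℤ} {x y : K} (hx : ValGE v n x) (hy : ValGE v n y) :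
    ValGE v n (x + y) := by
  by_cases hx0 : x = 0
  · simpa [hx0] using hy
  by_cases hy0 : y = 0
  · simpa [hy0] using hx
  by_cases hxy : x + y = 0
  · exact Or.inl hxy
  exact Or.inr ((le_min (hx.resolve_left hx0) (hy.resolve_left hy0)).trans
    (hv.min_le_add x y hx0 hy0 hxy))

lemma ge_neg (hv : IsDiscVal v) {n : ℤ} {x : K} (hx : ValGE v n x) : ValGE v n (-x) :=
  hx.imp (by simp) (by simp [hv.map_neg])

lemma ge_sub (hv : IsDiscVal v) {n : ℤ} {x y : K} (hx : ValGE v n x) (hy : ValGE v n y) :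
    ValGE v n (x - y) := by
  rw [sub_eq_add_neg]
  exact hv.ge_add hx (hv.ge_neg hy)

lemma ge_mul (hv : IsDiscVal v) {n k : ℤ} {x y : K} (hx : ValGE v n x) (hy : ValGE v k y) :
    ValGE v (n + k) (x * y) := by
  by_cases hx0 : x = 0
  · simpa [hx0] using ge_zero _
  by_cases hy0 : y = 0
  · simpa [hy0] using ge_zero _
  right
  rw [hv.map_mul x y hx0 hy0]
  exact add_le_add (hx.resolve_left hx0) (hy.resolve_left hy0)

lemma ge_pow (hv : IsDiscVal v) {n : ℤ} {x : K} (hx : ValGE v n x) (k : ℕ) :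
    ValGE v (k * n) (x ^ k) := by
  induction k with
  | zero => simpa using hv.ge_one
  | succ k ih =>
    rw [pow_succ]
    exact ge_mono (hv.ge_mul ih hx) (by push_cast; linarith)

lemma ge_sum (hv : IsDiscVal v) {ι : Type*} (s : Finset ι) {f : ι → K} {n : ℤ}
    (h : ∀ i ∈ s, ValGE v n (f i)) : ValGE v n (∑ i ∈ s, f i) := by
  classical
  induction s using Finset.induction_on with
  | empty => simpa using ge_zero n
  | insert a s ha ih =>
    rw [Finset.sum_insert ha]
    exact hv.ge_add (h a (by simp)) (ih fun i hi => h i (by simp [hi]))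

lemma ge_natCast (hv : IsDiscVal v) (n : ℕ) : ValGE v 0 (n : K) := by
  induction n with
  | zero => simpa using ge_zero 0
  | succ n ih =>
    rw [Nat.cast_succ]
    exact hv.ge_add ih hv.ge_one

lemma ge_intCast (hv : IsDiscVal v) (n : ℤ) : ValGE v 0 (n : K) := by
  obtain ⟨k, rfl | rfl⟩ := n.eq_nat_or_neg
  · simpa using hv.ge_natCast k
  · simpa using hv.ge_neg (hv.ge_natCast k)

lemma eq_one (hv : IsDiscVal v) : ValEQ v 0 1 := ⟨one_ne_zero, hv.map_one⟩

lemma eq_mul (hv : IsDiscVal v) {n k : ℤ} {x y : K} (hx : ValEQ v n x) (hy : ValEQ v k y) :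
    ValEQ v (n + k) (x * y) :=
  ⟨mul_ne_zero hx.1 hy.1, by rw [hv.map_mul x y hx.1 hy.1, hx.2, hy.2]⟩

lemma eq_inv (hv : IsDiscVal v) {n : ℤ} {x : K} (hx : ValEQ v n x) : ValEQ v (-n) x⁻¹ :=
  ⟨inv_ne_zero hx.1, by rw [hv.map_inv hx.1, hx.2]⟩

lemma eq_neg (hv : IsDiscVal v) {n : ℤ} {x : K} (hx : ValEQ v n x) : ValEQ v n (-x) :=
  ⟨neg_ne_zero.2 hx.1, by rw [hv.map_neg, hx.2]⟩

lemma eq_pow (hv : IsDiscVal v) {n : ℤ} {x : K} (hx : ValEQ v n x) (k : ℕ) :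
    ValEQ v (k * n) (x ^ k) := by
  induction k with
  | zero => simpa using hv.eq_one
  | succ k ih =>
    rw [pow_succ]
    convert hv.eq_mul ih hx using 1
    push_cast; ring

lemma map_pow (hv : IsDiscVal v) {x : K} (hx : x ≠ 0) (k : ℕ) : v (x ^ k) = k * v x :=
  (hv.eq_pow ⟨hx, rfl⟩ k).2

lemma not_eq_of_ge {n k : ℤ} {x : K} (h : ValGE v k x) (hnk : n < k) : ¬ ValEQ v n x := by
  rintro ⟨h0, h1⟩
  have := h.resolve_left h0
  omega

lemma eq_add_ge (hv : IsDiscVal v) {n k : ℤ} {x y : K} (hx : ValEQ v n x) (hy : ValGE v k y)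
    (hnk : n < k) : ValEQ v n (x + y) := by
  have h0 : x + y ≠ 0 := by
    intro h
    refine not_eq_of_ge hy hnk ?_
    rw [eq_neg_of_add_eq_zero_right h]
    exact hv.eq_neg hx
  refine ⟨h0, le_antisymm ?_ ?_⟩
  · by_contra! hlt
    have h1 : ValGE v (min (v (x + y)) k) x := by
      have := hv.ge_sub (ge_mono (ge_self (x + y)) (min_le_left _ k))
        (ge_mono hy (min_le_right (v (x + y)) k))
      simpa using this
    exact not_eq_of_ge h1 (lt_min hlt hnk) hx
  · exact (hv.ge_add (ge_of_eq hx) (ge_mono hy hnk.le)).resolve_left h0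

lemma eq_natCast (hv : IsDiscVal v) {p : ℕ} (hp : p.Prime) (hvp : ValGE v 1 (p : K)) {j : ℕ}
    (hj0 : 0 < j) (hjp : j < p) : ValEQ v 0 (j : K) := by
  have hcop : Nat.Coprime j p := (Nat.coprime_of_lt_prime hj0.ne' hjp hp).symm
  have hbez : ((j.gcdA p : ℤ) : K) * j + ((j.gcdB p : ℤ) : K) * p = 1 := by
    have h := Nat.gcd_eq_gcd_ab j p
    rw [hcop.gcd_eq_one] at h
    have h' := congrArg (Int.cast : ℤ → K) h
    push_cast at h'
    rw [h']; ring
  have key : ¬ ValGE v 1 (j : K) := by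
    intro h
    have h1 : ValGE v 1 (1 : K) := by
      rw [← hbez]
      exact hv.ge_add (by simpa using hv.ge_mul (hv.ge_intCast _) h)
        (by simpa using hv.ge_mul (hv.ge_intCast _) hvp)
    exact not_eq_of_ge h1 zero_lt_one hv.eq_one
  unfold ValGE at key
  push Not at key
  have := (hv.ge_natCast j).resolve_left key.1
  exact ⟨key.1, by omega⟩

lemma eq_factorial (hv : IsDiscVal v) {p : ℕ} (hp : p.Prime) (hvp : ValGE v 1 (p : K)) {j : ℕ}
    (hjp : j < p) : ValEQ v 0 (j.factorial : K) := by
  induction j with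
  | zero => simpa using hv.eq_one
  | succ j ih =>
    rw [Nat.factorial_succ, Nat.cast_mul]
    simpa using hv.eq_mul (hv.eq_natCast hp hvp j.succ_pos hjp) (ih (by omega))

/-- If `w ^ p - w` has negative valuation `n`, then `w` has valuation `n / p`. -/
lemma map_artinSchreier (hv : IsDiscVal v) {p : ℕ} (hp : p.Prime) {n : ℤ} {w : K}
    (hw : ValEQ v n (w ^ p - w)) (hn : n < 0) : w ≠ 0 ∧ p * v w = n := by
  have hp2 : (2 : ℤ) ≤ p := by exact_mod_cast hp.two_le
  have hneg : ¬ ValGE v 0 w := fun h =>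
    not_eq_of_ge (hv.ge_sub (by simpa using hv.ge_pow h p) h) hn hw
  unfold ValGE at hneg
  push Not at hneg
  refine ⟨hneg.1, ?_⟩
  have h1 := hv.eq_add_ge (hv.eq_pow ⟨hneg.1, rfl⟩ p) (hv.ge_neg (ge_self w))
    (by nlinarith [hneg.2])
  rw [← sub_eq_add_neg] at h1
  rw [← h1.2, hw.2]

end Basic

section Polynomials

variable {K : Type*} [Field K] {v : K → ℤ}

/-- The mixed terms of `(x + y) ^ p`, divided by `p`. -/
def mixed (p : ℕ) (x y : K) : K :=
  ∑ k ∈ Finset.Ioo 0 p, x ^ k * y ^ (p - k) * ((p.choose k / p : ℕ) : K)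

lemma add_pow_eq_mixed {p : ℕ} (hp : p.Prime) (x y : K) :
    (x + y) ^ p = x ^ p + y ^ p + p * mixed p x y :=
  add_pow_prime_eq' hp x y

lemma div_eq_neg_mixed [CharZero K] {p : ℕ} (hp : p.Prime) (x y : K) :
    (x ^ p + y ^ p - (x + y) ^ p) / (p : K) = -mixed p x y := by
  have : (p : K) ≠ 0 := by exact_mod_cast hp.ne_zero
  rw [add_pow_eq_mixed hp]
  field_simp
  ring

lemma ge_mixed (hv : IsDiscVal v) {p : ℕ} {n l : ℤ} {x y : K} (hn : n ≤ 0) (hl : 0 ≤ l)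
    (hx : ValGE v n x) (hy : ValGE v l y) : ValGE v ((p - 1) * n + l) (mixed p x y) := by
  refine hv.ge_sum _ fun k hk => ?_
  rw [Finset.mem_Ioo] at hk
  refine ge_mono (hv.ge_mul (hv.ge_mul (hv.ge_pow hx k) (hv.ge_pow hy (p - k)))
    (hv.ge_natCast _)) ?_
  have h1 : (k : ℤ) ≤ p - 1 := by omega
  have h2 : (1 : ℤ) ≤ ((p - k : ℕ) : ℤ) := by omega
  nlinarith

lemma ge_mixed_of_same (hv : IsDiscVal v) {p : ℕ} {n : ℤ} {x y : K}
    (hx : ValGE v n x) (hy : ValGE v n y) : ValGE v (p * n) (mixed p x y) := by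
  refine hv.ge_sum _ fun k hk => ?_
  rw [Finset.mem_Ioo] at hk
  refine ge_mono (hv.ge_mul (hv.ge_mul (hv.ge_pow hx k) (hv.ge_pow hy (p - k)))
    (hv.ge_natCast _)) ?_
  rw [Nat.cast_sub hk.2.le]
  exact le_of_eq (by ring)

lemma ge_pow_sub_pow (hv : IsDiscVal v) {n d : ℤ} {x y : K}
    (hx : ValGE v n x) (hy : ValGE v n y) (hxy : ValGE v d (x - y)) (k : ℕ) :
    ValGE v (d + ((k : ℤ) - 1) * n) (x ^ k - y ^ k) := by
  induction k with
  | zero => simpa using ge_zero _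
  | succ k ih =>
    rw [show x ^ (k + 1) - y ^ (k + 1) = (x ^ k - y ^ k) * x + y ^ k * (x - y) by ring]
    exact hv.ge_add (ge_mono (hv.ge_mul ih hx) (by push_cast; linarith))
      (ge_mono (hv.ge_mul (hv.ge_pow hy k) hxy) (by push_cast; linarith))

lemma ge_pow_sub_pow_sub (hv : IsDiscVal v) {n : ℤ} {x ε : K} (hn : n < 0)
    (hx : ValGE v n x) (hε : ValGE v 1 ε) (j : ℕ) :
    ValGE v (j * n + 1) ((x + 1 + ε) ^ (j + 1) - x ^ (j + 1) - ((j + 1 : ℕ) : K) * x ^ j) := by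
  have hε0 : ValGE v 0 (1 + ε) := hv.ge_add hv.ge_one (ge_mono hε (by omega))
  have hu : ValGE v n (x + 1 + ε) := by
    rw [add_assoc]
    exact hv.ge_add hx (ge_mono hε0 hn.le)
  induction j with
  | zero =>
    convert hε using 1 <;> simp
    ring
  | succ j ih =>
    rw [show (x + 1 + ε) ^ (j + 1 + 1) - x ^ (j + 1 + 1) - ((j + 1 + 1 : ℕ) : K) * x ^ (j + 1) =
      ((x + 1 + ε) ^ (j + 1) - x ^ (j + 1) - ((j + 1 : ℕ) : K) * x ^ j) * (x + 1 + ε) +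
      ((j + 1 : ℕ) : K) * x ^ j * (1 + ε) + x ^ (j + 1) * ε by push_cast; ring]
    refine hv.ge_add (hv.ge_add ?_ ?_) ?_
    · exact ge_mono (hv.ge_mul ih hu) (by push_cast; linarith)
    · exact ge_mono (hv.ge_mul (hv.ge_mul (hv.ge_natCast _) (hv.ge_pow hx j)) hε0)
        (by push_cast; linarith)
    · exact hv.ge_mul (hv.ge_pow hx (j + 1)) hε

lemma eq_pow_sub_pow (hv : IsDiscVal v) {p : ℕ} (hp : p.Prime) (hvp : ValGE v 1 (p : K))
    {n : ℤ} {x ε : K} (hn : n < 0) (hx : ValEQ v n x) (hε : ValGE v 1 ε) {j : ℕ} (hj0 : 0 < j)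
    (hjp : j < p) : ValEQ v ((j - 1) * n) ((x + 1 + ε) ^ j - x ^ j) := by
  obtain ⟨j, rfl⟩ := Nat.exists_eq_add_one.2 hj0
  have h := hv.eq_add_ge (hv.eq_mul (hv.eq_natCast hp hvp hj0 hjp) (hv.eq_pow hx j))
    (hv.ge_pow_sub_pow_sub hn (ge_of_eq hx) hε j) (by omega)
  rw [add_sub_cancel] at h
  convert h using 1
  push_cast; ring

lemma ge_mixed_sub_mixed (hv : IsDiscVal v) {p : ℕ} {n d : ℤ} {x y z : K} (hn : n ≤ 0)
    (hx : ValGE v n x) (hy : ValGE v n y) (hz : ValGE v 0 z) (hxy : ValGE v d (x - y)) :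
    ValGE v (d + ((p : ℤ) - 1) * n) (mixed p x z - mixed p y z) := by
  unfold mixed
  rw [← Finset.sum_sub_distrib]
  refine hv.ge_sum _ fun k hk => ?_
  rw [Finset.mem_Ioo] at hk
  rw [← sub_mul, ← sub_mul]
  refine ge_mono (hv.ge_mul (hv.ge_mul (hv.ge_pow_sub_pow hx hy hxy k)
    (hv.ge_pow hz (p - k))) (hv.ge_natCast _)) ?_
  have h1 : (k : ℤ) ≤ p - 1 := by omega
  nlinarith

/-- The falling factorial `x (x - 1) ⋯ (x - i + 1)`. -/
def falling (i : ℕ) (x : K) : K := ∏ k ∈ Finset.range i, (x - k)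

lemma falling_zero (x : K) : falling 0 x = 1 := by simp [falling]

lemma falling_succ (i : ℕ) (x : K) : falling (i + 1) x = falling i x * (x - i) := by
  simp [falling, Finset.prod_range_succ]

lemma falling_succ_add_one (i : ℕ) (x : K) :
    falling (i + 1) (x + 1) = (x + 1) * falling i x := by
  unfold falling
  rw [Finset.prod_range_succ', mul_comm]
  simp

lemma falling_add_one_sub (i : ℕ) (x : K) :
    falling i (x + 1) - falling i x = i * falling (i - 1) x := by
  cases i with
  | zero => simp [falling_zero]
  | succ i =>
    rw [falling_succ_add_one, falling_succ, Nat.add_sub_cancel]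
    push_cast; ring

/-- Vandermonde's identity for falling factorials. -/
lemma falling_add (i : ℕ) (x y : K) :
    falling i (x + y) =
      ∑ k ∈ Finset.range (i + 1), (i.choose k : K) * falling k y * falling (i - k) x := by
  have h : ∀ (i : ℕ) (z : K), (descPochhammer ℤ i).smeval z = falling i z := by
    intro i z
    induction i with
    | zero => simp [falling_zero]
    | succ i ih =>
      rw [descPochhammer_succ_right, Polynomial.smeval_mul, ih, falling_succ]
      simp [Polynomial.smeval_sub, Polynomial.smeval_natCast]
  rw [← h, add_comm, Ring.descPochhammer_smeval_add _ (Commute.all y x),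
    Finset.Nat.sum_antidiagonal_eq_sum_range_succ_mk]
  simp [h, mul_assoc]

lemma ge_falling (hv : IsDiscVal v) {n : ℤ} {x : K} (hn : n ≤ 0) (hx : ValGE v n x) (i : ℕ) :
    ValGE v (i * n) (falling i x) := by
  induction i with
  | zero => simpa [falling_zero] using hv.ge_one
  | succ i ih =>
    rw [falling_succ]
    exact ge_mono (hv.ge_mul ih (hv.ge_sub hx (ge_mono (hv.ge_natCast i) hn)))
      (by push_cast; linarith)

lemma eq_falling (hv : IsDiscVal v) {n : ℤ} {x : K} (hn : n < 0) (hx : ValEQ v n x) (i : ℕ) :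
    ValEQ v (i * n) (falling i x) := by
  induction i with
  | zero => simpa [falling_zero] using hv.eq_one
  | succ i ih =>
    rw [falling_succ, sub_eq_add_neg]
    convert hv.eq_mul ih (hv.eq_add_ge hx (hv.ge_neg (hv.ge_natCast i)) hn) using 1
    push_cast; ring

lemma ge_falling_sub_falling (hv : IsDiscVal v) {n d : ℤ} {x y : K} (hn : n ≤ 0)
    (hx : ValGE v n x) (hy : ValGE v n y) (hxy : ValGE v d (x - y)) (i : ℕ) :
    ValGE v (d + ((i : ℤ) - 1) * n) (falling i x - falling i y) := by
  induction i with
  | zero => simpa [falling_zero] using ge_zero _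
  | succ i ih =>
    rw [falling_succ, falling_succ,
      show falling i x * (x - i) - falling i y * (y - i) =
        (falling i x - falling i y) * (x - i) + falling i y * (x - y) by ring]
    exact hv.ge_add
      (ge_mono (hv.ge_mul ih (hv.ge_sub hx (ge_mono (hv.ge_natCast i) hn)))
        (by push_cast; linarith))
      (ge_mono (hv.ge_mul (hv.ge_falling hn hy i) hxy) (by push_cast; linarith))

end Polynomials

section Expansion

lemma eq_sum_of_dominant {K : Type*} [Field K] {v : K → ℤ} (hv : IsDiscVal v) {ι : Type*}
    [Fintype ι] {n : ℤ} {f : ι → K} {i₀ : ι} (h₀ : ValEQ v n (f i₀))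
    (h : ∀ i, i ≠ i₀ → ValGE v (n + 1) (f i)) : ValEQ v n (∑ i, f i) := by
  classical
  rw [← Finset.add_sum_erase _ _ (Finset.mem_univ i₀)]
  exact hv.eq_add_ge h₀ (hv.ge_sum _ fun i hi => h i (Finset.ne_of_mem_erase hi)) (by omega)

lemma exists_dominant {K : Type*} [Field K] {v : K → ℤ} {ι : Type*} [Fintype ι]
    {f : ι → K} (hf : ∃ i, f i ≠ 0)
    (hinj : ∀ i j, f i ≠ 0 → f j ≠ 0 → v (f i) = v (f j) → i = j) :
    ∃ i₀, f i₀ ≠ 0 ∧ ∀ i, i ≠ i₀ → ValGE v (v (f i₀) + 1) (f i) := by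
  classical
  obtain ⟨k, hk⟩ := hf
  obtain ⟨i₀, hi₀, hmin⟩ := Finset.exists_min_image
    (Finset.univ.filter fun i => f i ≠ 0) (fun i => v (f i)) ⟨k, by simpa using hk⟩
  have hi₀' : f i₀ ≠ 0 := by simpa using hi₀
  refine ⟨i₀, hi₀', fun i hi => ?_⟩
  by_cases h : f i = 0
  · exact Or.inl h
  · right
    have h1 := hmin i (by simpa using h)
    have h2 : v (f i) ≠ v (f i₀) := fun e => hi (hinj i i₀ h hi₀' e)
    omega

variable {K L : Type*} [Field K] [Field L] [Algebra K L] {v : K → ℤ} {w : L → ℤ}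
  {ι : Type*} [Fintype ι] {n : ℕ} {β : ι → L}

/-- In a totally ramified extension of degree `n`, a family of `n` elements whose valuations are
distinct modulo `n` is a basis in which every nonzero element has a unique dominant term. -/
lemma exists_expansion (hw : IsDiscVal w)
    (hram : ∀ x : K, x ≠ 0 → w (algebraMap K L x) = (n : ℤ) * v x)
    (hdeg : Module.finrank K L = n) (hcard : Fintype.card ι = n) (hn : 0 < n)
    (hβ : ∀ i, β i ≠ 0) (hinj : ∀ i j, (n : ℤ) ∣ w (β i) - w (β j) → i = j)
    {ρ : L} (hρ : ρ ≠ 0) :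
    ∃ (c : ι → K) (i₀ : ι), ρ = ∑ i, c i • β i ∧ ValEQ w (w ρ) (c i₀ • β i₀) ∧
      ∀ i, i ≠ i₀ → ValGE w (w ρ + 1) (c i • β i) := by
  have hsmul : ∀ (c : K) (i : ι), c ≠ 0 → w (c • β i) = n * v c + w (β i) := by
    intro c i hc
    rw [Algebra.smul_def, hw.map_mul _ _ (by simpa using hc) (hβ i), hram c hc]
  have hdom : ∀ c : ι → K, (∃ i, c i ≠ 0) → ∃ i₀, c i₀ • β i₀ ≠ 0 ∧
      ∀ i, i ≠ i₀ → ValGE w (w (c i₀ • β i₀) + 1) (c i • β i) := by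
    rintro c ⟨i, hi⟩
    refine exists_dominant (f := fun i => c i • β i) ⟨i, smul_ne_zero hi (hβ i)⟩ ?_
    intro i j hi hj hij
    have hi' := (smul_ne_zero_iff.1 hi).1
    have hj' := (smul_ne_zero_iff.1 hj).1
    simp only [hsmul _ _ hi', hsmul _ _ hj'] at hij
    exact hinj i j ⟨v (c j) - v (c i), by linarith⟩
  have hli : LinearIndependent K β := by
    rw [Fintype.linearIndependent_iff]
    intro c hc
    by_contra! hne
    obtain ⟨i₀, h₀, h₁⟩ := hdom c hne
    exact (hw.eq_sum_of_dominant (f := fun i => c i • β i) ⟨h₀, rfl⟩ h₁).1 hc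
  have : Nonempty ι := Fintype.card_pos_iff.1 (hcard ▸ hn)
  let B := basisOfLinearIndependentOfCardEqFinrank hli (hcard.trans hdeg.symm)
  have hB : ρ = ∑ i, B.repr ρ i • β i := by
    conv_lhs => rw [← B.sum_repr ρ]
    simp [B]
  have hne : ∃ i, B.repr ρ i ≠ 0 := by
    by_contra! h
    exact hρ (by rw [hB]; simp [h])
  obtain ⟨i₀, h₀, h₁⟩ := hdom _ hne
  have hv := hw.eq_sum_of_dominant (f := fun i => B.repr ρ i • β i) ⟨h₀, rfl⟩ h₁
  rw [← hB] at hv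
  refine ⟨fun i => B.repr ρ i, i₀, hB, ⟨h₀, hv.2.symm⟩, fun i hi => ?_⟩
  rw [hv.2]
  exact h₁ i hi

/-- If a linear operator raises the valuation of every basis element of `exists_expansion` by at
least `d`, then it raises all valuations by at least `d`. -/
lemma ge_apply_of_basis (hw : IsDiscVal w)
    (hram : ∀ x : K, x ≠ 0 → w (algebraMap K L x) = (n : ℤ) * v x)
    (hdeg : Module.finrank K L = n) (hcard : Fintype.card ι = n) (hn : 0 < n)
    (hβ : ∀ i, β i ≠ 0) (hinj : ∀ i j, (n : ℤ) ∣ w (β i) - w (β j) → i = j)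
    (T : L →ₗ[K] L) {d : ℤ} (hT : ∀ i, ValGE w (w (β i) + d) (T (β i)))
    {k : ℤ} {ρ : L} (hρ : ValGE w k ρ) : ValGE w (k + d) (T ρ) := by
  by_cases hρ0 : ρ = 0
  · simpa [hρ0] using ge_zero _
  obtain ⟨c, i₀, hc, h₀, h₁⟩ := hw.exists_expansion hram hdeg hcard hn hβ hinj hρ0
  have hk := hρ.resolve_left hρ0
  rw [hc, map_sum]
  refine hw.ge_sum _ fun i _ => ?_
  have hi : ValGE w k (c i • β i) := by
    by_cases h : i = i₀
    · exact h ▸ ge_mono (ge_of_eq h₀) hk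
    · exact ge_mono (h₁ i h) (by omega)
  rw [map_smul]
  by_cases hci : c i = 0
  · simpa [hci] using ge_zero _
  have hci' : algebraMap K L (c i) ≠ 0 := by simpa using hci
  rw [Algebra.smul_def] at hi ⊢
  have h2 := hi.resolve_left (mul_ne_zero hci' (hβ i))
  rw [hw.map_mul _ _ hci' (hβ i)] at h2
  exact ge_mono (hw.ge_mul (ge_self _) (hT i)) (by linarith)

/-- If a linear operator raises the valuations of the basis elements indexed by `S` by exactly `d`,
and those of the others by more than `d`, then it raises by exactly `d` all valuations that are
congruent modulo `n` to the valuation of an element indexed by `S`. -/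
lemma eq_apply_of_basis (hw : IsDiscVal w)
    (hram : ∀ x : K, x ≠ 0 → w (algebraMap K L x) = (n : ℤ) * v x)
    (hdeg : Module.finrank K L = n) (hcard : Fintype.card ι = n) (hn : 0 < n)
    (hβ : ∀ i, β i ≠ 0) (hinj : ∀ i j, (n : ℤ) ∣ w (β i) - w (β j) → i = j)
    (T : L →ₗ[K] L) {d : ℤ} (S : Set ι)
    (hS : ∀ i ∈ S, ValEQ w (w (β i) + d) (T (β i)))
    (hS' : ∀ i ∉ S, ValGE w (w (β i) + d + 1) (T (β i)))
    {ρ : L} (hρ : ρ ≠ 0) {j : ι} (hj : j ∈ S) (hjρ : (n : ℤ) ∣ w ρ - w (β j)) :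
    ValEQ w (w ρ + d) (T ρ) := by
  obtain ⟨c, i₀, hc, h₀, h₁⟩ := hw.exists_expansion hram hdeg hcard hn hβ hinj hρ
  have hsmul : ∀ i, c i ≠ 0 → w (c i • β i) = n * v (c i) + w (β i) := by
    intro i hci
    rw [Algebra.smul_def, hw.map_mul _ _ (by simpa using hci) (hβ i), hram _ hci]
  have hc₀ : c i₀ ≠ 0 := (smul_ne_zero_iff.1 h₀.1).1
  have hji : i₀ = j := by
    refine hinj _ _ ?_
    have h2 := h₀.2
    rw [hsmul _ hc₀] at h2
    obtain ⟨q, hq⟩ := hjρ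
    exact ⟨q - v (c i₀), by linarith⟩
  rw [hc, map_sum, ← hc]
  simp only [map_smul]
  refine hw.eq_sum_of_dominant (i₀ := i₀) ?_ fun i hi => ?_
  · have h2 := h₀.2
    rw [hsmul _ hc₀] at h2
    rw [Algebra.smul_def]
    convert hw.eq_mul (x := algebraMap K L (c i₀)) ⟨by simpa using hc₀, rfl⟩ (hS i₀ (hji ▸ hj)) using 1
    rw [hram _ hc₀]
    linarith
  · by_cases hci : c i = 0
    · simpa [hci] using ge_zero _
    have h2 := (h₁ i hi).resolve_left (smul_ne_zero hci (hβ i))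
    rw [hsmul _ hci] at h2
    have hT : ValGE w (w (β i) + d) (T (β i)) := by
      by_cases his : i ∈ S
      · exact ge_of_eq (hS i his)
      · exact ge_mono (hS' i his) (by omega)
    rw [Algebra.smul_def]
    refine ge_mono (hw.ge_mul (ge_self _) hT) ?_
    rw [hram _ hci]
    linarith

/-- In a totally ramified extension, the valuation is invariant under automorphisms. -/
lemma map_algEquiv (hw : IsDiscVal w)
    (hram : ∀ x : K, x ≠ 0 → w (algebraMap K L x) = (n : ℤ) * v x)
    (hdeg : Module.finrank K L = n) (hn : 0 < n) (σ : L ≃ₐ[K] L) (x : L) : w (σ x) = w x := by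
  obtain ⟨π, hπ, hwπ⟩ := hw.exists_uniformizer
  let β : Fin n → L := fun i => π ^ (i : ℕ)
  have hwβ : ∀ i, w (β i) = (i : ℕ) := fun i => by simp [β, hw.map_pow hπ, hwπ]
  have hβ : ∀ i, β i ≠ 0 := fun i => pow_ne_zero _ hπ
  have hinj : ∀ i j, (n : ℤ) ∣ w (β i) - w (β j) → i = j := by
    intro i j h
    rw [hwβ, hwβ] at h
    have h0 := Int.eq_zero_of_abs_lt_dvd h (by rw [abs_lt]; omega)
    ext
    omega
  obtain ⟨d, hd⟩ : ∃ d : ℤ, ∀ i, d ≤ w (σ (β i)) - w (β i) := by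
    have : Nonempty (Fin n) := ⟨⟨0, hn⟩⟩
    obtain ⟨i, hi⟩ := Finite.exists_min fun i => w (σ (β i)) - w (β i)
    exact ⟨_, hi⟩
  have hbound : ∀ y : L, y ≠ 0 → w y + d ≤ w (σ y) := by
    intro y hy
    have := hw.ge_apply_of_basis hram hdeg (Fintype.card_fin n) hn hβ hinj σ.toLinearMap
      (d := d) (fun i => Or.inr (by have := hd i; simp only [AlgEquiv.toLinearMap_apply]; omega))
      (ge_self y)
    exact this.resolve_left (by simpa using hy)
  have hle : ∀ y : L, y ≠ 0 → w y ≤ w (σ y) := by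
    intro y hy
    by_contra! hlt
    have h1 := hbound (y ^ (d.natAbs + 1)) (pow_ne_zero _ hy)
    rw [_root_.map_pow, hw.map_pow hy, hw.map_pow (by simpa using hy)] at h1
    have h2 : (((d.natAbs + 1 : ℕ)) : ℤ) = |d| + 1 := by simp
    rw [h2] at h1
    nlinarith [neg_abs_le d, abs_nonneg d]
  by_cases hx : x = 0
  · simp [hx]
  refine le_antisymm ?_ (hle x hx)
  have h := hle x⁻¹ (inv_ne_zero hx)
  rw [map_inv₀, hw.map_inv hx, hw.map_inv (by simpa using hx)] at h
  omega

end Expansion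

section Automorphisms

variable {K L : Type*} [Field K] [Field L] [Algebra K L] {w : L → ℤ}

lemma ge_algEquiv {σ : L ≃ₐ[K] L} (hσ : ∀ y, w (σ y) = w y) {n : ℤ} {x : L}
    (hx : ValGE w n x) : ValGE w n (σ x) :=
  hx.imp (by simp) (by simp [hσ])

/-- In a cyclic extension of degree `p ^ 2`, the `p`-th power of an automorphism fixes the roots
of an irreducible polynomial of degree `p` of Artin–Schreier form. -/
lemma pow_prime_apply_eq_self {p : ℕ} (hp : p.Prime) [IsGalois K L] [FiniteDimensional K L]
    (hdeg : Module.finrank K L = p ^ 2) (hcyc : IsCyclic (L ≃ₐ[K] L)) {a : K}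
    (ha : ∀ y : K, y ^ p - y ≠ a) {x : L} (hx : x ^ p - x = algebraMap K L a)
    (σ : L ≃ₐ[K] L) : (σ ^ p) x = x := by
  classical
  let H := MulAction.stabilizer (L ≃ₐ[K] L) x
  have hcard : Nat.card (L ≃ₐ[K] L) = p ^ 2 := by rw [IsGalois.card_aut_eq_finrank, hdeg]
  let P : Polynomial L := Polynomial.X ^ p - Polynomial.X - Polynomial.C (algebraMap K L a)
  have hPdeg : P.natDegree = p := by
    have h1 : (Polynomial.X : Polynomial L).natDegree < (Polynomial.X ^ p : Polynomial L).natDegree := by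
      simpa using hp.one_lt
    simp only [P, Polynomial.natDegree_sub_C]
    rw [Polynomial.natDegree_sub_eq_left_of_natDegree_lt h1, Polynomial.natDegree_X_pow]
  have hP0 : P ≠ 0 := fun h => by
    rw [h, Polynomial.natDegree_zero] at hPdeg
    exact hp.ne_zero hPdeg.symm
  have hle : H.index ≤ p := by
    rw [MulAction.index_stabilizer]
    have hsub : MulAction.orbit (L ≃ₐ[K] L) x ⊆ (P.roots.toFinset : Set L) := by
      rintro _ ⟨τ, rfl⟩
      have h := congrArg τ hx
      rw [map_sub, _root_.map_pow, AlgEquiv.commutes] at h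
      simp [P, hP0, h]
    refine (Set.ncard_le_ncard hsub (Finset.finite_toSet _)).trans ?_
    rw [Set.ncard_coe_finset]
    exact (Multiset.toFinset_card_le _).trans ((Polynomial.card_roots' _).trans hPdeg.le)
  have hne : H.index ≠ 1 := by
    intro h
    rw [Subgroup.index_eq_one] at h
    have hfix : ∀ τ : L ≃ₐ[K] L, τ x = x := fun τ => by
      have : τ ∈ H := h ▸ Subgroup.mem_top τ
      exact this
    obtain ⟨y, rfl⟩ := (IsGalois.mem_range_algebraMap_iff_fixed x).2 hfix
    refine ha y ((algebraMap K L).injective ?_)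
    rw [← hx, map_sub, _root_.map_pow]
  have hidx : H.index = p := by
    have hdvd : H.index ∣ p ^ 2 := hcard ▸ H.index_dvd_card
    obtain ⟨k, hk, hk'⟩ := (Nat.dvd_prime_pow hp).1 hdvd
    interval_cases k
    · simp [hk'] at hne
    · simpa using hk'
    · nlinarith [hp.two_le]
  have hcomm : ∀ a b : L ≃ₐ[K] L, a * b = b * a := fun a b =>
    (IsCyclic.commGroup (α := L ≃ₐ[K] L)).mul_comm a b
  have hnormal : H.Normal := ⟨fun a ha b => by rwa [hcomm b a, mul_inv_cancel_right]⟩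
  have hmem := H.pow_index_mem σ
  rw [hidx] at hmem
  exact hmem

lemma exists_pow_apply_eq (hw : IsDiscVal w) {σ : L ≃ₐ[K] L} (hσ : ∀ y, w (σ y) = w y)
    {x ε : L} {n : ℤ} (hx : σ x = x + 1 + ε) (hε : ValGE w n ε) (k : ℕ) :
    ∃ η, ValGE w n η ∧ (σ ^ k) x = x + k + η := by
  induction k with
  | zero => exact ⟨0, ge_zero n, by simp⟩
  | succ k ih =>
    obtain ⟨η, hη, h⟩ := ih
    refine ⟨ε + σ η, hw.ge_add hε (ge_algEquiv hσ hη), ?_⟩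
    rw [pow_succ', AlgEquiv.mul_apply, h, map_add, map_add, hx, map_natCast]
    push_cast; ring

lemma map_pow_algEquiv {σ : L ≃ₐ[K] L} (hσ : ∀ y, w (σ y) = w y) (k : ℕ) (y : L) :
    w ((σ ^ k) y) = w y := by
  induction k with
  | zero => simp
  | succ k ih => rw [pow_succ', AlgEquiv.mul_apply, hσ, ih]

/-- The action of the powers of `σ` on the second coordinate of a Witt vector of length two. -/
lemma exists_pow_apply_witt_eq [CharZero L] (hw : IsDiscVal w) {p : ℕ} (hp : p.Prime)
    {σ : L ≃ₐ[K] L} (hσ : ∀ y, w (σ y) = w y) {x z ε δ : L} {n e : ℤ} (hn : n ≤ 0)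
    (hx : ValGE w n x) (he : 1 ≤ e + (p - 1) * n) (hen : n ≤ e)
    (hσx : σ x = x + 1 + ε) (hε : ValGE w e ε)
    (hσz : σ z = z + (x ^ p + 1 - (x + 1) ^ p) / (p : L) + δ) (hδ : ValGE w 1 δ) (k : ℕ) :
    ∃ η, ValGE w 1 η ∧ (σ ^ k) z = z + (x ^ p + k - (x + k) ^ p) / (p : L) + η := by
  induction k with
  | zero => exact ⟨0, ge_zero 1, by simp⟩
  | succ k ih =>
    obtain ⟨η, hη, h⟩ := ih
    obtain ⟨θ, hθ, hxk⟩ := hw.exists_pow_apply_eq hσ hσx hε k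
    have hk : ValGE w n (x + k) := hw.ge_add hx (ge_mono (hw.ge_natCast k) hn)
    refine ⟨η - (mixed p (x + k + θ) 1 - mixed p (x + k) 1) + (σ ^ k) δ, ?_, ?_⟩
    · refine hw.ge_add (hw.ge_sub hη ?_) (ge_algEquiv (map_pow_algEquiv hσ k) hδ)
      exact ge_mono (hw.ge_mixed_sub_mixed (d := e) hn (hw.ge_add hk (ge_mono hθ hen)) hk
        hw.ge_one (by simpa using hθ)) he
    · have h2 := div_eq_neg_mixed hp (x + k + θ) (1 : L)
      have h3 := div_eq_neg_mixed hp (x + k) (1 : L)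
      rw [one_pow] at h2 h3
      have h4 : (σ ^ k) ((x ^ p + 1 - (x + 1) ^ p) / (p : L)) =
          ((x + k + θ) ^ p + 1 - (x + k + θ + 1) ^ p) / (p : L) := by
        simp only [map_div₀, map_sub, map_add, _root_.map_pow, _root_.map_one, map_natCast, hxk]
      rw [pow_succ, AlgEquiv.mul_apply, hσz, map_add, map_add, h, h4, h2,
        ← neg_neg (mixed p (x + k) 1), ← h3]
      push_cast
      ring

lemma algEquiv_falling (σ : L ≃ₐ[K] L) (i : ℕ) (y : L) :
    σ (falling i y) = falling i (σ y) := by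
  simp [falling, map_prod]

/-- A sharper bound on the defect of `σ z - z = 1 + δ`, when `z` and `σ z` have the same image
under the Artin–Schreier map. -/
lemma ge_defect (hw : IsDiscVal w) {p : ℕ} (hp : p.Prime) {z δ : L} {n e : ℤ} (hn : n ≤ 0)
    (hz : ValGE w n z) (he : ValGE w e (p : L)) (hδ : ValGE w 1 δ)
    (h : (z + (1 + δ)) ^ p - (z + (1 + δ)) = z ^ p - z) : ValGE w (e + (p - 1) * n) δ := by
  have hp2 : (2 : ℤ) ≤ p := by exact_mod_cast hp.two_le
  have hδ0 : ValGE w 0 δ := ge_mono hδ (by omega)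
  have hkey : δ ^ p - δ = -(p * (mixed p z (1 + δ) + mixed p 1 δ)) := by
    rw [add_pow_eq_mixed hp z, add_pow_eq_mixed hp 1, one_pow] at h
    linear_combination h
  have hge : ValGE w (e + (p - 1) * n) (δ ^ p - δ) := by
    rw [hkey]
    refine hw.ge_neg (hw.ge_mul he (hw.ge_add ?_ ?_))
    · simpa using hw.ge_mixed hn le_rfl hz (hw.ge_add hw.ge_one hδ0)
    · exact ge_mono (hw.ge_mixed le_rfl le_rfl hw.ge_one hδ0) (by nlinarith)
  by_cases h0 : δ = 0
  · exact Or.inl h0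
  have h1 := hδ.resolve_left h0
  have h2 := hw.eq_add_ge (hw.eq_neg (⟨h0, rfl⟩ : ValEQ w (w δ) δ)) (hw.ge_pow (ge_self δ) p)
    (by nlinarith)
  rw [neg_add_eq_sub] at h2
  right
  rw [← h2.2]
  exact hge.resolve_left h2.1

section Difference

variable {τ : L ≃ₐ[K] L} {Ψ : Module.End K L} {Y δ : L} {b d : ℤ}

lemma ge_difference_falling (hw : IsDiscVal w) (hΨ : ∀ y, Ψ y = τ y - y) (hb : 0 ≤ b)
    (hd : 0 ≤ d) (hY : ValGE w (-b) Y) (hτ : τ Y = Y + 1 + δ) (hδ : ValGE w d δ) (i : ℕ) :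
    ValGE w (d - (i - 1) * b) (Ψ (falling i Y) - i * falling (i - 1) Y) := by
  have hY1 : ValGE w (-b) (Y + 1) := hw.ge_add hY (ge_mono hw.ge_one (by omega))
  have h := hw.ge_falling_sub_falling (d := d) (x := Y + 1 + δ) (y := Y + 1) (by omega)
    (hw.ge_add hY1 (ge_mono hδ (by omega))) hY1 (by simpa using hδ) i
  rw [hΨ, algEquiv_falling, hτ, ← falling_add_one_sub]
  convert h using 1 <;> ring

lemma ge_iterate_difference_falling (hw : IsDiscVal w) (hΨ : ∀ y, Ψ y = τ y - y) (hb : 0 ≤ b)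
    (hd : 0 ≤ d) (hY : ValGE w (-b) Y) (hτ : τ Y = Y + 1 + δ) (hδ : ValGE w d δ)
    (hraise : ∀ k ρ, ValGE w k ρ → ValGE w (k + b) (Ψ ρ)) (i k : ℕ) :
    ValGE w (d - (i - k) * b)
      ((Ψ ^ k) (falling i Y) - (i.descFactorial k : L) * falling (i - k) Y) := by
  induction k with
  | zero => simpa using ge_zero _
  | succ k ih =>
    have hnat : ∀ (c : ℕ) (y : L), Ψ (c * y) = c * Ψ y := by
      intro c y
      rw [← nsmul_eq_mul, map_nsmul, nsmul_eq_mul]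
    have hsplit : (Ψ ^ (k + 1)) (falling i Y) -
        (i.descFactorial (k + 1) : L) * falling (i - (k + 1)) Y =
        Ψ ((Ψ ^ k) (falling i Y) - (i.descFactorial k : L) * falling (i - k) Y) +
        (i.descFactorial k : L) *
          (Ψ (falling (i - k) Y) - ((i - k : ℕ) : L) * falling (i - k - 1) Y) := by
      rw [pow_succ', Module.End.mul_apply, map_sub, hnat, Nat.descFactorial_succ, Nat.sub_sub]
      push_cast
      ring
    rw [hsplit]
    refine hw.ge_add (ge_mono (hraise _ _ ih) (by push_cast; linarith)) ?_
    by_cases hik : k ≤ i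
    · refine ge_mono (hw.ge_mul (hw.ge_natCast _)
        (hw.ge_difference_falling hΨ hb hd hY hτ hδ (i - k))) ?_
      push_cast [hik]
      exact le_of_eq (by ring)
    · rw [Nat.descFactorial_of_lt (by omega)]
      simpa using ge_zero _

/-- The truncated power `∑ k < p, C(μ, k) Ψ ^ k` translates `Y` by `μ`, up to an error. -/
lemma ge_truncated_power_sub [CharZero K] (hw : IsDiscVal w) {p : ℕ} (hp : p.Prime)
    (hwp : ValGE w 1 (p : L)) {μ : K} {M : ℤ} (hM : 0 ≤ M) (hMb : M ≤ b)
    (hμ : ValGE w (-M) (algebraMap K L μ))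
    (hΨ : ∀ y, Ψ y = τ y - y) (hd : 0 ≤ d) (hY : ValGE w (-b) Y)
    (hτ : τ Y = Y + 1 + δ) (hδ : ValGE w d δ)
    (hraise : ∀ k ρ, ValGE w k ρ → ValGE w (k + b) (Ψ ρ)) {i : ℕ} (hi : i < p) :
    ValGE w (d - i * b)
      ((∑ k ∈ Finset.range p,
        ((∏ l ∈ Finset.range k, (μ - (l : K))) / (Nat.factorial k : K)) • Ψ ^ k) (falling i Y) -
        falling i (Y + algebraMap K L μ)) := by
  have : CharZero L := charZero_of_injective_algebraMap (algebraMap K L).injective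
  have hcoeff : ∀ k : ℕ, algebraMap K L
      ((∏ l ∈ Finset.range k, (μ - (l : K))) / (Nat.factorial k : K)) =
      falling k (algebraMap K L μ) * (k.factorial : L)⁻¹ := by
    intro k
    simp [falling, map_prod, div_eq_mul_inv]
  have hvand : falling i (Y + algebraMap K L μ) = ∑ k ∈ Finset.range p,
      falling k (algebraMap K L μ) * (k.factorial : L)⁻¹ *
        ((i.descFactorial k : L) * falling (i - k) Y) := by
    rw [falling_add]
    have hsub : Finset.range (i + 1) ⊆ Finset.range p := Finset.range_mono (by omega)
    rw [Finset.sum_subset hsub fun k _ hk => by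
      rw [Nat.choose_eq_zero_of_lt (by simpa using hk)]; simp]
    refine Finset.sum_congr rfl fun k _ => ?_
    have : (k.factorial : L) ≠ 0 := by exact_mod_cast k.factorial_ne_zero
    rw [Nat.descFactorial_eq_factorial_mul_choose]
    push_cast
    field_simp
  rw [hvand, LinearMap.sum_apply, ← Finset.sum_sub_distrib]
  refine hw.ge_sum _ fun k hk => ?_
  rw [Finset.mem_range] at hk
  rw [LinearMap.smul_apply, Algebra.smul_def, hcoeff, ← mul_sub]
  refine ge_mono (hw.ge_mul (hw.ge_mul (hw.ge_falling (by omega) hμ k)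
    (ge_of_eq (hw.eq_inv (hw.eq_factorial hp hwp hk))))
    (hw.ge_iterate_difference_falling hΨ (hM.trans hMb) hd hY hτ hδ hraise i k)) ?_
  have hk0 : (0 : ℤ) ≤ k := by positivity
  nlinarith

end Difference

end Automorphisms

end IsDiscVal

set_option maxHeartbeats 2000000 in
/-- Corollary 3.6: for `0 ≤ i,j ≤ p−1` and any `α ∈ K₂` with
`v₂(α) ≡ b₂ (mod p²)`, one has `v₂(Ψ₁^i Ψ₂^j α) = v₂(α) + j·b₂ + i·p·b₁`. -/
theorem statement10
    (p : ℕ) (hp : p.Prime)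
    (K0 K2 : Type*) [Field K0] [Field K2] [CharZero K0] [CharZero K2]
    [Algebra K0 K2] [IsGalois K0 K2] [FiniteDimensional K0 K2]
    (hdeg : Module.finrank K0 K2 = p ^ 2)
    (hcyc : IsCyclic (K2 ≃ₐ[K0] K2))
    (v0 : K0 → ℤ) (v2 : K2 → ℤ)
    (hv0 : IsDiscVal v0) (hv2 : IsDiscVal v2)
    (e0 : ℤ) (he0 : e0 = v0 (p : K0)) (he0pos : 1 ≤ e0)
    (hram : ∀ x : K0, x ≠ 0 → v2 (algebraMap K0 K2 x) = (p : ℤ) ^ 2 * v0 x)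
    (a1 μ a2 : K0) (ha1 : a1 ≠ 0) (hμ0 : μ ≠ 0)
    (hwitt : ∀ y : K0, y ^ p - y ≠ a1)
    (hnd : ¬ ((p : ℤ) ∣ v0 a1))
    (hneg : v0 a1 < 0)
    (hbd : -((p : ℤ) * e0) < ((p : ℤ) ^ 2 - 1) * v0 a1)
    (m : ℤ) (hm : m = -v0 μ) (hmpos : 0 < m)
    (hmu1 : (p : ℤ) ^ 2 * (p - 1) * m - (2 * p * (p - 1) + 1) * v0 a1 < (p : ℤ) ^ 2 * e0)
    (hmu2 : -(((p : ℤ) ^ 2 - 1) * v0 a1) < (p : ℤ) ^ 2 * m)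
    (ha2 : a2 = μ ^ p * a1)
    (x1 x2 : K2)
    (hx1 : x1 ^ p - x1 = algebraMap K0 K2 a1)
    (hx2 : x2 ^ p - x2 = algebraMap K0 K2 a2 +
      (x1 ^ p + (algebraMap K0 K2 a1) ^ p - (x1 + algebraMap K0 K2 a1) ^ p) / (p : K2))
    (hgen : Algebra.adjoin K0 {x1, x2} = ⊤)
    (b1 b2 : ℤ) (hb1 : b1 = -v0 a1) (hb2 : b2 = (p : ℤ) ^ 2 * m + b1)
    (σ1 : K2 ≃ₐ[K0] K2) (ε δ' : K2)
    (hσ1x1 : σ1 x1 = x1 + 1 + ε)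
    (hε : ε ≠ 0) (hεv : v2 ε = (p : ℤ) ^ 2 * e0 - p * (p - 1) * b1)
    (hσ1x2 : σ1 x2 = x2 + (x1 ^ p + 1 - (x1 + 1) ^ p) / (p : K2) + δ')
    (hδ' : δ' = 0 ∨ 0 < v2 δ')
    (Ψ1 Ψ2 : Module.End K0 K2)
    (hΨ2 : Ψ2 = ((σ1 ^ p).toLinearMap : Module.End K0 K2) - 1)
    (hΨ1 : Ψ1 = (σ1.toLinearMap : Module.End K0 K2) *
      (∑ i ∈ Finset.range p,
        ((∏ k ∈ Finset.range i, (μ - (k : K0))) / (Nat.factorial i : K0)) • Ψ2 ^ i) - 1) :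
    ∀ i j : ℕ, i ≤ p - 1 → j ≤ p - 1 →
      ∀ α : K2, α ≠ 0 → ((p : ℤ) ^ 2) ∣ (v2 α - b2) →
        (Ψ1 ^ i * Ψ2 ^ j) α ≠ 0 ∧
        v2 ((Ψ1 ^ i * Ψ2 ^ j) α) = v2 α + (j : ℤ) * b2 + (i : ℤ) * p * b1 := by
  have hp2 : (2 : ℤ) ≤ p := by exact_mod_cast hp.two_le
  have hb1pos : 1 ≤ b1 := by omega
  have hb1nd : ¬ (p : ℤ) ∣ b1 := by rwa [hb1, dvd_neg]
  have hva1 : v0 a1 = -b1 := by omega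
  rw [hva1] at hbd hmu1 hmu2
  have hpb1 : 2 ≤ (p : ℤ) * b1 := by nlinarith
  have hppb1 : (p : ℤ) * b1 * 2 ≤ (p : ℤ) * b1 * p := by nlinarith
  -- the absolute ramification index bounds both `b1` and `m`
  have he0big : (p : ℤ) * ((p : ℤ) ^ 2 - 1) * b1 < (p : ℤ) ^ 2 * e0 := by nlinarith
  have hp0 : (p : K2) ≠ 0 := by exact_mod_cast hp.ne_zero
  have hram' : ∀ x : K0, x ≠ 0 → v2 (algebraMap K0 K2 x) = ((p ^ 2 : ℕ) : ℤ) * v0 x := by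
    intro x hx
    rw [hram x hx]
    push_cast
    rfl
  have hn : 0 < p ^ 2 := pow_pos hp.pos 2
  have hinv : ∀ (σ : K2 ≃ₐ[K0] K2) (y : K2), v2 (σ y) = v2 y := hv2.map_algEquiv hram' hdeg hn
  have hvp : ValEQ v2 ((p : ℤ) ^ 2 * e0) (p : K2) := by
    refine ⟨hp0, ?_⟩
    rw [he0, ← hram _ (by exact_mod_cast hp.ne_zero), map_natCast]
  have hvp1 : ValGE v2 1 (p : K2) := IsDiscVal.ge_mono (IsDiscVal.ge_of_eq hvp) (by nlinarith)
  have hva1' : ValEQ v2 (-((p : ℤ) ^ 2 * b1)) (algebraMap K0 K2 a1) :=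
    ⟨by simpa using ha1, by rw [hram _ ha1, hva1]; ring⟩
  have hvμ : ValEQ v2 (-((p : ℤ) ^ 2 * m)) (algebraMap K0 K2 μ) :=
    ⟨by simpa using hμ0, by rw [hram _ hμ0, hm]; ring⟩
  have hvx1 : ValEQ v2 (-(p * b1)) x1 := by
    obtain ⟨h0, h1⟩ := hv2.map_artinSchreier hp (hx1 ▸ hva1') (by nlinarith)
    refine ⟨h0, ?_⟩
    have : (p : ℤ) * v2 x1 = p * (-(p * b1)) := by rw [h1]; ring
    exact mul_left_cancel₀ (by omega) this
  have hvD : ValGE v2 (-((p : ℤ) ^ 3 * b1)) (IsDiscVal.mixed p x1 (algebraMap K0 K2 a1)) := by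
    refine IsDiscVal.ge_mono (hv2.ge_mixed_of_same (n := -((p : ℤ) ^ 2 * b1))
      (IsDiscVal.ge_mono (IsDiscVal.ge_of_eq hvx1) ?_) (IsDiscVal.ge_of_eq hva1')) ?_
    · nlinarith
    · exact le_of_eq (by ring)
  have hpm : (p : ℤ) * (((p : ℤ) ^ 2 - 1) * b1) < p * ((p : ℤ) ^ 2 * m) := by nlinarith
  have hx2' := hx2
  rw [IsDiscVal.div_eq_neg_mixed hp, ha2, map_mul, map_pow] at hx2'
  have hvx2 : ValEQ v2 (-((p : ℤ) ^ 2 * m + p * b1)) x2 := by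
    have hc : ValEQ v2 (-((p : ℤ) * (p ^ 2 * m + p * b1))) (x2 ^ p - x2) := by
      rw [hx2']
      convert hv2.eq_add_ge (hv2.eq_mul (hv2.eq_pow hvμ p) hva1') (hv2.ge_neg hvD) ?_ using 1
      · ring
      · nlinarith
    obtain ⟨h0, h1⟩ := hv2.map_artinSchreier hp hc (by nlinarith)
    refine ⟨h0, ?_⟩
    have : (p : ℤ) * v2 x2 = p * (-((p : ℤ) ^ 2 * m + p * b1)) := by rw [h1]; ring
    exact mul_left_cancel₀ (by omega) this
  have hb2pos : 0 < b2 := by nlinarith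
  -- the element `Y`, whose valuation is prime to `p`
  obtain ⟨Y, hY⟩ : ∃ Y, Y = x2 - algebraMap K0 K2 μ * x1 := ⟨_, rfl⟩
  have hvY : ValEQ v2 (-b2) Y := by
    have hμx1 : ValEQ v2 (-((p : ℤ) ^ 2 * m + p * b1)) (algebraMap K0 K2 μ * x1) := by
      convert hv2.eq_mul hvμ hvx1 using 1
      ring
    have hYge : ValGE v2 (-((p : ℤ) ^ 2 * m + p * b1)) Y := by
      rw [hY]
      exact hv2.ge_sub (IsDiscVal.ge_of_eq hvx2) (IsDiscVal.ge_of_eq hμx1)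
    have hYp : Y ^ p = -((algebraMap K0 K2 μ) ^ p * x1) +
        (x2 - IsDiscVal.mixed p x1 (algebraMap K0 K2 a1) -
          p * IsDiscVal.mixed p Y (algebraMap K0 K2 μ * x1)) := by
      have h := IsDiscVal.add_pow_eq_mixed hp Y (algebraMap K0 K2 μ * x1)
      rw [show Y + algebraMap K0 K2 μ * x1 = x2 by rw [hY]; ring, mul_pow] at h
      linear_combination hx2' - h - (algebraMap K0 K2 μ) ^ p * hx1
    have hYpv : ValEQ v2 (-((p : ℤ) ^ 3 * m + p * b1)) (Y ^ p) := by
      rw [hYp]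
      refine hv2.eq_add_ge (k := -((p : ℤ) ^ 3 * m + p * b1) + 1) ?_ ?_ (by omega)
      · convert hv2.eq_neg (hv2.eq_mul (hv2.eq_pow hvμ p) hvx1) using 1
        ring
      · refine hv2.ge_sub (hv2.ge_sub ?_ ?_) ?_
        · refine IsDiscVal.ge_mono (IsDiscVal.ge_of_eq hvx2) ?_
          have : 2 * ((p : ℤ) ^ 2 * m) ≤ p * ((p : ℤ) ^ 2 * m) := by
            nlinarith [mul_pos (pow_pos (by omega : (0 : ℤ) < p) 2) hmpos]
          nlinarith [mul_pos (pow_pos (by omega : (0 : ℤ) < p) 2) hmpos]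
        · refine IsDiscVal.ge_mono hvD ?_
          nlinarith
        · refine IsDiscVal.ge_mono (hv2.ge_mul (IsDiscVal.ge_of_eq hvp)
            (hv2.ge_mixed_of_same hYge (IsDiscVal.ge_of_eq hμx1))) ?_
          nlinarith
    have hY0 : Y ≠ 0 := fun h => hYpv.1 (by rw [h, zero_pow hp.ne_zero])
    refine ⟨hY0, ?_⟩
    have h := hv2.map_pow hY0 p
    rw [hYpv.2] at h
    have : (p : ℤ) * v2 Y = p * (-b2) := by rw [← h, hb2]; ring
    exact mul_left_cancel₀ (by omega) this
  have hτx1 : (σ1 ^ p) x1 = x1 := IsDiscVal.pow_prime_apply_eq_self hp hdeg hcyc hwitt hx1 σ1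
  -- the action of `σ1 ^ p` on `Y`
  obtain ⟨δ, hδ, hτY⟩ : ∃ δ, ValGE v2 (p * b1 + 1) δ ∧ (σ1 ^ p) Y = Y + 1 + δ := by
    obtain ⟨η, hη, hηx2⟩ := hv2.exists_pow_apply_witt_eq hp (hinv σ1)
      (n := -(p * b1)) (e := (p : ℤ) ^ 2 * e0 - p * (p - 1) * b1) (by omega)
      (IsDiscVal.ge_of_eq hvx1) (by nlinarith) (by nlinarith) hσ1x1 (Or.inr hεv.ge) hσ1x2
      (hδ'.imp id fun h => h) p
    have hmix : ValGE v2 1 (IsDiscVal.mixed p x1 (p : K2)) :=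
      IsDiscVal.ge_mono (hv2.ge_mixed (by omega) (by nlinarith) (IsDiscVal.ge_of_eq hvx1)
        (IsDiscVal.ge_of_eq hvp)) (by nlinarith)
    obtain ⟨δ, hδdef⟩ : ∃ δ, δ = η - IsDiscVal.mixed p x1 (p : K2) - (p : K2) ^ (p - 1) :=
      ⟨_, rfl⟩
    have hδ1 : ValGE v2 1 δ := by
      rw [hδdef]
      refine hv2.ge_sub (hv2.ge_sub hη hmix) (IsDiscVal.ge_mono (hv2.ge_pow hvp1 _) ?_)
      have := hp.two_le
      omega
    have hτx2 : (σ1 ^ p) x2 = x2 + (1 + δ) := by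
      have h1 := IsDiscVal.div_eq_neg_mixed hp x1 (p : K2)
      have h2 : (p : K2) ^ p / p = (p : K2) ^ (p - 1) := by
        rw [div_eq_iff hp0, ← pow_succ, Nat.sub_add_cancel hp.one_le]
      have h3 : (p : K2) / p = 1 := div_self hp0
      rw [hηx2, hδdef, ← neg_neg (IsDiscVal.mixed p x1 (p : K2)), ← h1, ← h2, ← h3]
      ring
    have hAS : (x2 + (1 + δ)) ^ p - (x2 + (1 + δ)) = x2 ^ p - x2 := by
      rw [← hτx2, ← map_pow, ← map_sub, hx2]
      simp only [map_add, map_sub, map_div₀, map_pow, map_natCast, AlgEquiv.commutes, hτx1]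
    refine ⟨δ, IsDiscVal.ge_mono (hv2.ge_defect hp ?_ (IsDiscVal.ge_of_eq hvx2)
      (IsDiscVal.ge_of_eq hvp) hδ1 hAS) ?_, ?_⟩
    · nlinarith
    · nlinarith
    · rw [hY, map_sub, map_mul, AlgEquiv.commutes, hτx1, hτx2]
      ring
  have hΨ2' : ∀ y, Ψ2 y = (σ1 ^ p) y - y := fun y => by rw [hΨ2]; rfl
  have hYge := IsDiscVal.ge_of_eq hvY
  have hΨ2zero : ∀ j : ℕ, Ψ2 (x1 ^ j) = 0 := fun j => by rw [hΨ2', map_pow, hτx1, sub_self]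
  have hΨ2mul : ∀ (j : ℕ) (y : K2), Ψ2 (y * x1 ^ j) = Ψ2 y * x1 ^ j := by
    intro j y
    rw [hΨ2', hΨ2', map_mul, map_pow, hτx1, sub_mul]
  -- a basis of `K2` with valuations distinct modulo `p ^ 2`
  let β : Fin p × Fin p → K2 := fun i => IsDiscVal.falling i.1 Y * x1 ^ (i.2 : ℕ)
  have hβv : ∀ i, ValEQ v2 (-((i.1 : ℕ) * b2 + (i.2 : ℕ) * (p * b1))) (β i) := by
    intro i
    convert hv2.eq_mul (hv2.eq_falling (by omega) hvY i.1) (hv2.eq_pow hvx1 i.2) using 1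
    ring
  have hβ0 : ∀ i, β i ≠ 0 := fun i => (hβv i).1
  have hβinj : ∀ i j, ((p ^ 2 : ℕ) : ℤ) ∣ v2 (β i) - v2 (β j) → i = j := by
    rintro ⟨i, j⟩ ⟨i', j'⟩ h
    rw [(hβv _).2, (hβv _).2] at h
    have hpp : Prime (p : ℤ) := Nat.prime_iff_prime_int.1 hp
    have hfin : ∀ k l : Fin p, (p : ℤ) ∣ ((k : ℕ) : ℤ) - (l : ℕ) → k = l := by
      intro k l hkl
      have := Int.eq_zero_of_abs_lt_dvd hkl (by rw [abs_lt]; omega)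
      ext
      omega
    obtain ⟨q, hq⟩ := h
    push_cast at hq
    simp only [hb2] at hq
    have hi : i = i' := by
      have : (p : ℤ) ∣ (((i : ℕ) : ℤ) - (i' : ℕ)) * b1 :=
        ⟨-(p * q) - p * m * ((i : ℕ) - (i' : ℕ)) - b1 * ((j : ℕ) - (j' : ℕ)), by
          linear_combination -hq⟩
      exact hfin _ _ ((hpp.dvd_or_dvd this).resolve_right hb1nd)
    subst hi
    have hj : j = j' := by
      have : (p : ℤ) ∣ (((j : ℕ) : ℤ) - (j' : ℕ)) * b1 :=
        ⟨-q, mul_left_cancel₀ hpp.ne_zero (by linear_combination -hq)⟩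
      exact hfin _ _ ((hpp.dvd_or_dvd this).resolve_right hb1nd)
    rw [hj]
  have hcard : Fintype.card (Fin p × Fin p) = p ^ 2 := by simp [sq]
  -- `Ψ2` on the basis
  have hΨ2β : ∀ i : Fin p × Fin p, (i.1 : ℕ) ≠ 0 → ValEQ v2 (v2 (β i) + b2) (Ψ2 (β i)) := by
    rintro ⟨i, j⟩ hi
    have hi1 : (((i : ℕ) - 1 : ℕ) : ℤ) = (i : ℕ) - 1 := by simp only at hi; omega
    have h1 := hv2.eq_mul (hv2.eq_natCast hp hvp1 (Nat.pos_of_ne_zero hi) i.2)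
      (hv2.eq_falling (by omega) hvY ((i : ℕ) - 1))
    have h2 := hv2.ge_difference_falling hΨ2' hb2pos.le (by omega) hYge hτY hδ i
    have h3 := hv2.eq_add_ge h1 h2 (by rw [hi1]; linarith)
    rw [add_sub_cancel] at h3
    rw [(hβv _).2]
    convert hv2.eq_mul h3 (hv2.eq_pow hvx1 j) using 1
    · rw [hi1]; ring
    · exact hΨ2mul _ _
  have hΨ2β' : ∀ i : Fin p × Fin p, (i.1 : ℕ) = 0 → Ψ2 (β i) = 0 := by
    intro i hi
    simp only [β, hi, IsDiscVal.falling_zero, one_mul, hΨ2zero]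
  have hraise : ∀ k ρ, ValGE v2 k ρ → ValGE v2 (k + b2) (Ψ2 ρ) := by
    intro k ρ hρ
    refine hv2.ge_apply_of_basis hram' hdeg hcard hn hβ0 hβinj Ψ2 (fun i => ?_) hρ
    by_cases hi : (i.1 : ℕ) = 0
    · exact Or.inl (hΨ2β' i hi)
    · exact IsDiscVal.ge_of_eq (hΨ2β i hi)
  -- `Ψ1` on the basis
  obtain ⟨Q, hQ⟩ : ∃ Q : Module.End K0 K2, Q = ∑ i ∈ Finset.range p,
    ((∏ k ∈ Finset.range i, (μ - (k : K0))) / (Nat.factorial i : K0)) • Ψ2 ^ i := ⟨_, rfl⟩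
  have hΨ1' : ∀ y, Ψ1 y = σ1 (Q y) - y := fun y => by rw [hΨ1, ← hQ]; rfl
  have hΨ2powmul : ∀ (k j : ℕ) (y : K2), (Ψ2 ^ k) (y * x1 ^ j) = (Ψ2 ^ k) y * x1 ^ j := by
    intro k j y
    induction k with
    | zero => simp
    | succ k ih => rw [pow_succ', Module.End.mul_apply, ih, hΨ2mul, Module.End.mul_apply]
  have hQmul : ∀ (j : ℕ) (y : K2), Q (y * x1 ^ j) = Q y * x1 ^ j := by
    intro j y
    simp only [hQ, LinearMap.sum_apply, LinearMap.smul_apply, hΨ2powmul, Finset.sum_mul,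
      smul_mul_assoc]
  have hεge : ValGE v2 ((p : ℤ) ^ 2 * e0 - p * (p - 1) * b1) ε := Or.inr hεv.ge
  obtain ⟨E, hE, hσ1Y⟩ : ∃ E, ValGE v2 (p * b1 + 1 - b2) E ∧
      σ1 Y + algebraMap K0 K2 μ = Y + E := by
    refine ⟨-IsDiscVal.mixed p x1 1 + δ' - algebraMap K0 K2 μ * ε, ?_, ?_⟩
    · refine hv2.ge_sub (hv2.ge_add (hv2.ge_neg ?_) ?_) ?_
      · refine IsDiscVal.ge_mono (hv2.ge_mixed (by omega) le_rfl (IsDiscVal.ge_of_eq hvx1)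
          hv2.ge_one) ?_
        nlinarith
      · refine IsDiscVal.ge_mono (n := 1) (hδ'.imp id fun h => h) ?_
        nlinarith
      · refine IsDiscVal.ge_mono (hv2.ge_mul (IsDiscVal.ge_of_eq hvμ) hεge) ?_
        nlinarith
    · have h1 := IsDiscVal.div_eq_neg_mixed hp x1 (1 : K2)
      rw [one_pow] at h1
      rw [hY, map_sub, map_mul, AlgEquiv.commutes, hσ1x1, hσ1x2, h1]
      ring
  have hσ1Q : ∀ i < p, ValGE v2 (p * b1 + 1 - i * b2)
      (σ1 (Q (IsDiscVal.falling i Y)) - IsDiscVal.falling i Y) := by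
    intro i hi
    have h1 := hv2.ge_truncated_power_sub hp hvp1 (M := (p : ℤ) ^ 2 * m) (b := b2)
      (by nlinarith) (by omega) (IsDiscVal.ge_of_eq hvμ) hΨ2' (by omega) hYge hτY hδ hraise hi
    rw [← hQ] at h1
    have h2 := IsDiscVal.ge_algEquiv (hinv σ1) h1
    rw [map_sub, IsDiscVal.algEquiv_falling, map_add, AlgEquiv.commutes, hσ1Y] at h2
    have h3 := hv2.ge_falling_sub_falling (d := p * b1 + 1 - b2) (x := Y + E) (y := Y) (by omega)
      (hv2.ge_add hYge (IsDiscVal.ge_mono hE (by omega))) hYge (by simpa using hE) i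
    rw [← sub_add_sub_cancel _ (IsDiscVal.falling i (Y + E))]
    exact hv2.ge_add h2 (IsDiscVal.ge_mono h3 (by linarith))
  have hε1 : ValGE v2 1 ε := IsDiscVal.ge_mono hεge (by nlinarith)
  have hσx1ge : ValGE v2 (-(p * b1)) (x1 + 1 + ε) := by
    rw [← hσ1x1]
    exact IsDiscVal.ge_algEquiv (hinv σ1) (IsDiscVal.ge_of_eq hvx1)
  have hΨ1split : ∀ i : Fin p × Fin p, Ψ1 (β i) =
      IsDiscVal.falling i.1 Y * ((x1 + 1 + ε) ^ (i.2 : ℕ) - x1 ^ (i.2 : ℕ)) +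
      (σ1 (Q (IsDiscVal.falling i.1 Y)) - IsDiscVal.falling i.1 Y) *
        (x1 + 1 + ε) ^ (i.2 : ℕ) := by
    intro i
    simp only [β]
    rw [hΨ1', hQmul, map_mul, map_pow, hσ1x1]
    ring
  have hΨ1err : ∀ i : Fin p × Fin p, ValGE v2 (v2 (β i) + p * b1 + 1)
      ((σ1 (Q (IsDiscVal.falling i.1 Y)) - IsDiscVal.falling i.1 Y) *
        (x1 + 1 + ε) ^ (i.2 : ℕ)) := by
    intro i
    refine IsDiscVal.ge_mono (hv2.ge_mul (hσ1Q i.1 i.1.2) (hv2.ge_pow hσx1ge i.2)) ?_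
    rw [(hβv i).2]
    linarith
  have hpowdiff : ∀ j : ℕ, 0 < j → j < p →
      ValEQ v2 (-((j - 1) * (p * b1))) ((x1 + 1 + ε) ^ j - x1 ^ j) := by
    intro j hj0 hjp
    convert hv2.eq_pow_sub_pow hp hvp1 (by omega) hvx1 hε1 hj0 hjp using 1
    ring
  have hΨ1β : ∀ i : Fin p × Fin p, (i.2 : ℕ) ≠ 0 →
      ValEQ v2 (v2 (β i) + p * b1) (Ψ1 (β i)) := by
    intro i hi
    rw [hΨ1split]
    refine hv2.eq_add_ge ?_ (hΨ1err i) (by omega)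
    convert hv2.eq_mul (hv2.eq_falling (by omega) hvY i.1)
      (hpowdiff i.2 (Nat.pos_of_ne_zero hi) i.2.2) using 1
    rw [(hβv i).2]
    ring
  have hΨ1β' : ∀ i : Fin p × Fin p, (i.2 : ℕ) = 0 →
      ValGE v2 (v2 (β i) + p * b1 + 1) (Ψ1 (β i)) := by
    intro i hi
    have h := hΨ1err i
    rw [hΨ1split]
    simpa [hi] using h
  -- induction on the exponents
  intro i j hi hj α hα hαb
  obtain ⟨q, hq⟩ := hαb
  have hstep2 : ∀ k : ℕ, k ≤ p - 1 → ValEQ v2 (v2 α + k * b2) ((Ψ2 ^ k) α) := by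
    intro k hk
    induction k with
    | zero => simpa using ⟨hα, rfl⟩
    | succ k ih =>
      obtain ⟨h0, h1⟩ := ih (by omega)
      rw [pow_succ', Module.End.mul_apply]
      have h := hv2.eq_apply_of_basis hram' hdeg hcard hn hβ0 hβinj Ψ2 {i | (i.1 : ℕ) ≠ 0}
        hΨ2β (fun i hi => Or.inl (hΨ2β' i (by simpa using hi))) h0
        (j := (⟨p - 1 - k, by omega⟩, ⟨p - 1, by omega⟩)) (by simp; omega) (by
          rw [(hβv _).2, h1]
          have e1 : ((p - 1 - k : ℕ) : ℤ) = p - 1 - k := by omega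
          have e2 : ((p - 1 : ℕ) : ℤ) = p - 1 := by omega
          simp only [e1, e2]
          push_cast
          exact ⟨q + p * m + b1, by linear_combination hq + p * hb2⟩)
      convert h using 1
      rw [h1]
      push_cast
      ring
  have hstep1 : ∀ k : ℕ, k ≤ p - 1 →
      ValEQ v2 (v2 α + j * b2 + k * p * b1) ((Ψ1 ^ k) ((Ψ2 ^ j) α)) := by
    intro k hk
    induction k with
    | zero => simpa using hstep2 j hj
    | succ k ih =>
      obtain ⟨h0, h1⟩ := ih (by omega)
      rw [pow_succ', Module.End.mul_apply]
      have h := hv2.eq_apply_of_basis hram' hdeg hcard hn hβ0 hβinj Ψ1 {i | (i.2 : ℕ) ≠ 0}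
        hΨ1β (fun i hi => hΨ1β' i (by simpa using hi)) h0
        (j := (⟨p - 1 - j, by omega⟩, ⟨p - 1 - k, by omega⟩)) (by simp; omega) (by
          rw [(hβv _).2, h1]
          have e1 : ((p - 1 - k : ℕ) : ℤ) = p - 1 - k := by omega
          have e2 : ((p - 1 - j : ℕ) : ℤ) = p - 1 - j := by omega
          simp only [e1, e2]
          push_cast
          exact ⟨q + p * m + b1, by linear_combination hq + p * hb2⟩)
      convert h using 1
      rw [h1]
      push_cast
      ring
  exact hstep1 i hi
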